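/- arXiv:2405.16399 — 2 statements merged into one kernel-verified Lean document; each statement's English description precedes it below -/
import Mathlib

section
/- The pair (Γ_h, α_h) is a GKM graph, i.e. the labeling α_h is an axial function: (1) the reversed edge (w(i,j), w) of (w, w(i,j)) has label α_h(w(i,j), w) = −α_h(w, w(i,j)); (2) at every vertex w, the labels t_{w(i)} − t_{w(j)} over distinct pairs (i,j) with j < i ≤ h(j) are pairwise linearly independent in L; (3) for every edge e = (w, w(i,j)) there is a bijection θ from the set of edges starting at w to the set of edges starting at w(i,j) such that α_h(θ(e′)) ≡ α_h(e′) mod ℤ(t_{w(i)} − t_{w(j)}) for every edge e′ starting at w. -/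
/-!
The vertices `w` and `w(i,j)` have the same set of index pairs `(k,l)` with `l < k ≤ h(l)`, and
transporting an edge from one to the other by keeping its pair `(k,l)` already satisfies the
congruence condition: each `t_{w((i,j)k)} - t_{w(k)}` is a multiple of `t_{w(i)} - t_{w(j)}`
(`exists_single_swap_sub`), so labels change only by such multiples. Independence at a vertex
holds because `j < i` makes each pair determined by its underlying set, so two
distinct edges give distinct two-element supports, and a relation between the labels is refuted by
evaluating at the four indices involved.
-/



open Equiv

def SumZero (n : ℕ) : AddSubgroup (Fin n → ℤ) where
  carrier := {v | ∑ i, v i = 0}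
  zero_mem' := by simp
  add_mem' := by
    intro a b ha hb
    simp only [Set.mem_setOf_eq] at *
    simp [Finset.sum_add_distrib, ha, hb]
  neg_mem' := by
    intro a ha
    simp only [Set.mem_setOf_eq] at *
    simp [ha]

theorem mem_sumZero {n : ℕ} {v : Fin n → ℤ} : v ∈ SumZero n ↔ ∑ i, v i = 0 := Iff.rfl

def root {n : ℕ} (k l : Fin n) : SumZero n :=
  ⟨Pi.single k 1 - Pi.single l 1, by
    rw [mem_sumZero]
    simp [Finset.sum_sub_distrib, Finset.sum_pi_single]⟩

structure HEdge (n : ℕ) (h : Fin n → Fin n) where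
  w : Equiv.Perm (Fin n)
  i : Fin n
  j : Fin n
  hlt : j < i
  hle : i ≤ h j

variable {n : ℕ} {h : Fin n → Fin n}

def HEdge.ini (e : HEdge n h) : Equiv.Perm (Fin n) := e.w
def HEdge.ter (e : HEdge n h) : Equiv.Perm (Fin n) := e.w * Equiv.swap e.i e.j
def HEdge.rev (e : HEdge n h) : HEdge n h := ⟨e.ter, e.i, e.j, e.hlt, e.hle⟩
def HEdge.lab (e : HEdge n h) : SumZero n := root (e.w e.i) (e.w e.j)



theorem root_apply (k l x : Fin n) :
    (root k l : SumZero n).1 x = (if x = k then 1 else 0) - (if x = l then 1 else 0) := by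
  simp [root, Pi.single_apply]

/-- Modulo `t_{w(a)} - t_{w(b)}`, precomposing `w` with the transposition of `a` and `b` does not
change the class of `t_{w(i)}`. -/
theorem exists_single_swap_sub (w : Equiv.Perm (Fin n)) (a b i : Fin n) :
    ∃ m : ℤ, (Pi.single (w (swap a b i)) 1 - Pi.single (w i) 1 : Fin n → ℤ)
      = m • (root (w a) (w b)).1 := by
  by_cases ha : i = a
  · exact ⟨-1, by subst ha; simp [root]⟩
  · by_cases hb : i = b
    · exact ⟨1, by subst hb; simp [root]⟩
    · exact ⟨0, by simp [swap_apply_of_ne_of_ne ha hb]⟩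

/-- The edge with the same index pair as `e`, starting at `v`. -/
def HEdge.move (e : HEdge n h) (v : Equiv.Perm (Fin n)) : HEdge n h :=
  ⟨v, e.i, e.j, e.hlt, e.hle⟩

/-- The bijection between the edges at `u` and those at `v` that keeps index pairs. -/
def moveEquiv (u v : Equiv.Perm (Fin n)) :
    {e : HEdge n h // e.ini = u} ≃ {e : HEdge n h // e.ini = v} where
  toFun e := ⟨e.1.move v, rfl⟩
  invFun e := ⟨e.1.move u, rfl⟩
  left_inv := by rintro ⟨e, rfl⟩; rfl
  right_inv := by rintro ⟨e, rfl⟩; rfl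

theorem linearIndependent_lab (e e' : HEdge n h) (hne : e ≠ e') (hini : e.ini = e'.ini) :
    LinearIndependent ℤ ![e.lab, e'.lab] := by
  obtain ⟨w, i, j, hlt, hle⟩ := e
  obtain ⟨w', i', j', hlt', hle'⟩ := e'
  obtain rfl : w = w' := hini
  have hp : ¬ (i = i' ∧ j = j') := by
    rintro ⟨rfl, rfl⟩
    exact hne rfl
  rw [LinearIndependent.pair_iff]
  intro c d hcd
  -- the relation, read off at the coordinate `w k`
  have key : ∀ k : Fin n, c * ((if k = i then 1 else 0) - (if k = j then 1 else 0))
      + d * ((if k = i' then 1 else 0) - (if k = j' then 1 else 0)) = 0 := by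
    intro k
    have := congrFun (congrArg Subtype.val hcd) (w k)
    simpa [HEdge.lab, root_apply] using this
  have h1 := key i
  have h2 := key j
  have h3 := key i'
  have h4 := key j'
  grind

/-- The labeled graph `(Γ_h, α_h)` of a regular semisimple Hessenberg
variety is a GKM graph: the labeling `α_h` is an axial function. -/
theorem hessenberg_graph_is_GKM (n : ℕ) (hn : 2 ≤ n) (h : Fin n → Fin n)
    (hmono : Monotone h) (hge : ∀ j, j ≤ h j) :
    -- (1) the reversed edge has the opposite label
    (∀ e : HEdge n h, e.rev.lab = - e.lab)
    -- (2) labels of distinct edges with the same initial vertex are linearly independent in L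
    ∧ (∀ e e' : HEdge n h, e ≠ e' → e.ini = e'.ini →
        LinearIndependent ℤ ![e.lab, e'.lab])
    -- (3) congruence condition: a bijection between the edges at the two endpoints
    ∧ (∀ e : HEdge n h,
        ∃ θ : {e' : HEdge n h // e'.ini = e.ini} ≃ {e' : HEdge n h // e'.ini = e.ter},
          ∀ e' : {e' : HEdge n h // e'.ini = e.ini},
            ∃ m : ℤ, (θ e').1.lab - e'.1.lab = m • e.lab) := by
  refine ⟨fun e => ?_, linearIndependent_lab, fun e => ⟨moveEquiv _ _, ?_⟩⟩
  · apply Subtype.ext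
    simp [HEdge.lab, HEdge.rev, HEdge.ter, root]
  · rintro ⟨⟨w, k, l, hlt, hle⟩, hw⟩
    obtain rfl : w = e.w := hw
    obtain ⟨m₁, h₁⟩ := exists_single_swap_sub e.w e.i e.j k
    obtain ⟨m₂, h₂⟩ := exists_single_swap_sub e.w e.i e.j l
    refine ⟨m₁ - m₂, Subtype.ext ?_⟩
    change (Pi.single (e.w (swap e.i e.j k)) 1 - Pi.single (e.w (swap e.i e.j l)) 1)
      - (Pi.single (e.w k) 1 - Pi.single (e.w l) 1) = (m₁ - m₂) • (root (e.w e.i) (e.w e.j)).1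
    rw [sub_smul, ← h₁, ← h₂]
    abel
end

section
/- For every τ ∈ S_n and every ξ ∈ H^*_{T̂}(Γ_h, α_h), the map τ·ξ defined by (τ·ξ)(w) = τ(ξ(τ^{−1}w)) — where τ acts on ℤ[t_1, …, t_n] by the ring automorphism with t_i ↦ t_{τ(i)} — again belongs to H^*_{T̂}(Γ_h, α_h) (Tymoczko's dot action is well defined); moreover, for every σ ∈ S_n and ξ ∈ H^*_{T̂}(Γ_h, α_h) one has ((φ_σ, ψ_σ)^*ξ)(w) = ψ_σ^{−1}(ξ(σw)) = (σ^{−1}·ξ)(w), i.e. the action of Φ_σ coincides with the dot action of σ^{−1}. -/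
open Equiv MvPolynomial

/-- Membership in the equivariant graph cohomology `H^*_{T̂}(Γ_h, α_h)`: a map
`ξ : S_n → ℤ[t_1, …, t_n]` such that `ξ(w) - ξ(w(i,j))` is divisible by
`t_{w(i)} - t_{w(j)}` for every `w` and every pair `j < i ≤ h(j)`. -/
def InHT (n : ℕ) (h : Fin n → Fin n)
    (ξ : Equiv.Perm (Fin n) → MvPolynomial (Fin n) ℤ) : Prop :=
  ∀ (w : Equiv.Perm (Fin n)) (i j : Fin n), j < i → i ≤ h j →
    (X (w i) - X (w j) : MvPolynomial (Fin n) ℤ) ∣ (ξ w - ξ (w * Equiv.swap i j))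

/-- Tymoczko's dot action: `(τ·ξ)(w) = τ(ξ(τ⁻¹ w))`, where `τ` acts on `ℤ[t_1, …, t_n]`
by the ring automorphism `t_i ↦ t_{τ(i)}`. -/
noncomputable def dotAction (n : ℕ) (τ : Equiv.Perm (Fin n))
    (ξ : Equiv.Perm (Fin n) → MvPolynomial (Fin n) ℤ) :
    Equiv.Perm (Fin n) → MvPolynomial (Fin n) ℤ :=
  fun w => (renameEquiv ℤ (τ : Fin n ≃ Fin n)) (ξ (τ⁻¹ * w))

/-- The dot action is well defined on `H^*_{T̂}(Γ_h, α_h)`, and the action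
`((φ_σ, ψ_σ)^*ξ)(w) = ψ_σ⁻¹(ξ(σw))` of `Φ_σ` coincides with the dot action of `σ⁻¹`. -/
theorem dot_action_wd_and_phiSigma (n : ℕ) (hn : 2 ≤ n) (h : Fin n → Fin n)
    (hmono : Monotone h) (hge : ∀ j, j ≤ h j) :
    (∀ (τ : Equiv.Perm (Fin n)) (ξ : Equiv.Perm (Fin n) → MvPolynomial (Fin n) ℤ),
      InHT n h ξ → InHT n h (dotAction n τ ξ))
    ∧ (∀ (σ : Equiv.Perm (Fin n)) (ξ : Equiv.Perm (Fin n) → MvPolynomial (Fin n) ℤ),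
        InHT n h ξ → ∀ w : Equiv.Perm (Fin n),
          (renameEquiv ℤ (σ : Fin n ≃ Fin n)).symm (ξ (σ * w)) = dotAction n σ⁻¹ ξ w) := by
  refine ⟨fun τ ξ hξ w i j hji hij => ?_, fun σ ξ _ w => ?_⟩
  -- Apply `τ` to the divisibility at `τ⁻¹ w`: it carries the edge label
  -- `t_{τ⁻¹ w(i)} - t_{τ⁻¹ w(j)}` to `t_{w(i)} - t_{w(j)}`.
  · have key := map_dvd (renameEquiv ℤ (τ : Fin n ≃ Fin n)) (hξ (τ⁻¹ * w) i j hji hij)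
    simpa [dotAction, mul_assoc] using key
  · simp only [dotAction, inv_inv, renameEquiv_symm]
    rfl
end
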